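/- arXiv:2411.14240 — 6 statements merged into one kernel-verified Lean document; each statement's English description precedes it below -/
import Mathlib

section
/- Let L > 0 and r₁, r₂ > 0 satisfy the strict triangle inequalities |r₁ − r₂| < 2L < r₁ + r₂. Set c₃ = (r₂² − r₁² − 4L²)/(4L²) and c₄ = r₁²/(4L²). Then: (i) t² + c₃t + c₄ > 0 for every t ∈ [0, 1]; and (ii) for all real c₁, c₂, ∫₀¹ (c₁t + c₂)/√(t² + c₃t + c₄) dt = −(c₁/(2L))(r₁ − r₂) + (1/(8L²))·[c₁(4L² + r₁² − r₂²) + 8c₂L²]·ln((2L + r₁ + r₂)/(r₁ + r₂ − 2L)). -/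
/-!
Write `q t = t ^ 2 + p * t + r` for a monic quadratic that is positive on `[u, v]`. The function
`t ↦ log ((√q(u) + √q(t) + (t - u)) / (√q(u) + √q(t) - (t - u)))` is a primitive of `1 / √q` there.
It vanishes at `u` and, unlike `log (2 * t + p + 2 * √q(t))`, it is not lost to `log 0` when `q` has
a double root to the right of `v`, that is, when the attracted point lies on the line through the
segment, beyond its end. Splitting `m * t + n` as `m / 2 * q'(t) + (n - m * p / 2)` then gives the
integral.

For the segment, lengths are measured in units of `2 * L`. With `a = r₁ / (2 * L)` and
`b = r₂ / (2 * L)`, Stewart's theorem gives the squared distance from the attracted point to the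
point of parameter `t` as `t ^ 2 + (b ^ 2 - a ^ 2 - 1) * t + a ^ 2`.
-/

section MonicQuadratic

variable {p r u v : ℝ}

theorem sub_lt_sqrt_add_sqrt_of_quadratic_pos (huv : u ≤ v)
    (hq : ∀ t ∈ Set.Icc u v, 0 < t ^ 2 + p * t + r) :
    v - u < √(u ^ 2 + p * u + r) + √(v ^ 2 + p * v + r) := by
  have hu := hq u (Set.left_mem_Icc.mpr huv)
  set A := √(u ^ 2 + p * u + r)
  have hA : 0 < A := Real.sqrt_pos.mpr hu
  have hA_sq : A ^ 2 = u ^ 2 + p * u + r := Real.sq_sqrt hu.le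
  rcases lt_or_ge (v - u) A with hlt | hle
  · exact lt_add_of_lt_of_nonneg hlt (Real.sqrt_nonneg _)
  · -- Positivity at the intermediate point `u + A` bounds the slope of the quadratic at `u`.
    have hslope : 0 < 2 * A + (2 * u + p) := by
      have hmid := hq (u + A) ⟨by linarith, by linarith⟩
      refine pos_of_mul_pos_right (a := A) ?_ hA.le
      linear_combination hmid - hA_sq
    have hgap : (v - u - A) ^ 2 < v ^ 2 + p * v + r := by
      have hprod := mul_pos (hA.trans_le hle) hslope
      linear_combination hprod + hA_sq
    linarith [Real.lt_sqrt_of_sq_lt hgap]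

theorem hasDerivAt_sqrt_quadratic {t : ℝ} (ht : t ^ 2 + p * t + r ≠ 0) :
    HasDerivAt (fun t => √(t ^ 2 + p * t + r)) ((2 * t + p) / (2 * √(t ^ 2 + p * t + r))) t := by
  have hquad : HasDerivAt (fun t => t ^ 2 + p * t + r) (2 * t + p) t := by
    simpa using ((hasDerivAt_pow 2 t).add ((hasDerivAt_id t).const_mul p)).add_const r
  exact hquad.sqrt ht

theorem hasDerivAt_log_sqrt_quadratic {t : ℝ} (hut : u ≤ t)
    (hq : ∀ x ∈ Set.Icc u t, 0 < x ^ 2 + p * x + r) :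
    HasDerivAt
      (fun t => Real.log ((√(u ^ 2 + p * u + r) + √(t ^ 2 + p * t + r) + (t - u)) /
        (√(u ^ 2 + p * u + r) + √(t ^ 2 + p * t + r) - (t - u))))
      (1 / √(t ^ 2 + p * t + r)) t := by
  have hu := hq u (Set.left_mem_Icc.mpr hut)
  have ht := hq t (Set.right_mem_Icc.mpr hut)
  have hden := sub_pos.mpr (sub_lt_sqrt_add_sqrt_of_quadratic_pos hut hq)
  have hs' := (hasDerivAt_sqrt_quadratic ht.ne').const_add √(u ^ 2 + p * u + r)
  have hid : HasDerivAt (fun t => t - u) 1 t := (hasDerivAt_id t).sub_const u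
  have hA_sq := Real.sq_sqrt hu.le
  have hs_sq := Real.sq_sqrt ht.le
  have hs := Real.sqrt_pos.mpr ht
  have hnum : 0 < √(u ^ 2 + p * u + r) + √(t ^ 2 + p * t + r) + (t - u) := by
    linarith [Real.sqrt_nonneg (u ^ 2 + p * u + r)]
  refine (((hs'.add hid).div (hs'.sub hid) hden.ne').log (div_pos hnum hden).ne').congr_deriv ?_
  simp only [Pi.add_apply, Pi.sub_apply, Pi.div_apply]
  generalize √(u ^ 2 + p * u + r) = A at *
  generalize √(t ^ 2 + p * t + r) = s at *
  have hnum_ne := hnum.ne'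
  have hden_ne := hden.ne'
  field_simp
  linear_combination 2 * hs_sq - 2 * hA_sq

theorem integral_linear_div_sqrt_quadratic (huv : u ≤ v)
    (hq : ∀ t ∈ Set.Icc u v, 0 < t ^ 2 + p * t + r) (m n : ℝ) :
    (∫ t in u..v, (m * t + n) / √(t ^ 2 + p * t + r)) =
      m * (√(v ^ 2 + p * v + r) - √(u ^ 2 + p * u + r)) +
        (n - m * p / 2) *
          Real.log ((√(u ^ 2 + p * u + r) + √(v ^ 2 + p * v + r) + (v - u)) /
            (√(u ^ 2 + p * u + r) + √(v ^ 2 + p * v + r) - (v - u))) := by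
  have hderiv : ∀ t ∈ Set.uIcc u v, HasDerivAt
      (fun t => m * √(t ^ 2 + p * t + r) + (n - m * p / 2) *
        Real.log ((√(u ^ 2 + p * u + r) + √(t ^ 2 + p * t + r) + (t - u)) /
          (√(u ^ 2 + p * u + r) + √(t ^ 2 + p * t + r) - (t - u))))
      ((m * t + n) / √(t ^ 2 + p * t + r)) t := by
    intro t ht
    rw [Set.uIcc_of_le huv] at ht
    have hsqrt := hasDerivAt_sqrt_quadratic (hq t ht).ne'
    have hlog := hasDerivAt_log_sqrt_quadratic ht.1 fun x hx => hq x ⟨hx.1, hx.2.trans ht.2⟩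
    refine ((hsqrt.const_mul m).add (hlog.const_mul (n - m * p / 2))).congr_deriv ?_
    field_simp
    ring
  have hint : IntervalIntegrable (fun t => (m * t + n) / √(t ^ 2 + p * t + r))
      MeasureTheory.volume u v := by
    refine ContinuousOn.intervalIntegrable_of_Icc huv ?_
    exact ContinuousOn.div (by fun_prop) (by fun_prop)
      fun t ht => (Real.sqrt_pos.mpr (hq t ht)).ne'
  rw [intervalIntegral.integral_eq_sub_of_hasDerivAt hderiv hint]
  have hA := Real.sqrt_pos.mpr (hq u (Set.left_mem_Icc.mpr huv))
  have hlog_left : Real.log ((√(u ^ 2 + p * u + r) + √(u ^ 2 + p * u + r) + (u - u)) /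
      (√(u ^ 2 + p * u + r) + √(u ^ 2 + p * u + r) - (u - u))) = 0 := by
    rw [sub_self, add_zero, sub_zero, div_self (by positivity), Real.log_one]
  rw [hlog_left]
  ring

end MonicQuadratic

section UnitSegment

variable {a b : ℝ}

theorem stewart_quadratic_pos (ha : 0 < a) (hb : 0 < b) (hab : 1 < a + b) {t : ℝ}
    (ht : t ∈ Set.Icc (0 : ℝ) 1) : 0 < t ^ 2 + (b ^ 2 - a ^ 2 - 1) * t + a ^ 2 := by
  have hsplit : t ^ 2 + (b ^ 2 - a ^ 2 - 1) * t + a ^ 2 =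
      ((1 - t) * a - t * b) ^ 2 + t * (1 - t) * ((a + b) ^ 2 - 1) := by ring
  have hexcess : 0 < (a + b) ^ 2 - 1 := sub_pos.mpr (one_lt_pow₀ hab two_ne_zero)
  rcases ht.1.eq_or_lt with rfl | ht₀
  · simpa using pow_pos ha 2
  rcases ht.2.eq_or_lt with rfl | ht₁
  · simpa using pow_pos hb 2
  rw [hsplit]
  exact add_pos_of_nonneg_of_pos (sq_nonneg _)
    (mul_pos (mul_pos ht₀ (sub_pos.mpr ht₁)) hexcess)

theorem integral_linear_div_sqrt_stewart_quadratic (ha : 0 < a) (hb : 0 < b) (hab : 1 < a + b)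
    (m n : ℝ) :
    (∫ t in (0 : ℝ)..1, (m * t + n) / √(t ^ 2 + (b ^ 2 - a ^ 2 - 1) * t + a ^ 2)) =
      m * (b - a) + (n - m * (b ^ 2 - a ^ 2 - 1) / 2) *
        Real.log ((a + b + 1) / (a + b - 1)) := by
  have hleft : √((0 : ℝ) ^ 2 + (b ^ 2 - a ^ 2 - 1) * 0 + a ^ 2) = a := by
    convert Real.sqrt_sq ha.le using 2
    ring
  have hright : √((1 : ℝ) ^ 2 + (b ^ 2 - a ^ 2 - 1) * 1 + a ^ 2) = b := by
    convert Real.sqrt_sq hb.le using 2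
    ring
  rw [integral_linear_div_sqrt_quadratic zero_le_one
    (fun t ht => stewart_quadratic_pos ha hb hab ht), hleft, hright, sub_zero]

end UnitSegment

theorem segment_potential_integral_general (L r₁ r₂ c₃ c₄ : ℝ)
    (hL : 0 < L) (hr₁ : 0 < r₁) (hr₂ : 0 < r₂) (htri : 2 * L < r₁ + r₂)
    (hc₃ : c₃ = (r₂ ^ 2 - r₁ ^ 2 - 4 * L ^ 2) / (4 * L ^ 2))
    (hc₄ : c₄ = r₁ ^ 2 / (4 * L ^ 2)) :
    (∀ t ∈ Set.Icc (0 : ℝ) 1, 0 < t ^ 2 + c₃ * t + c₄) ∧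
    ∀ c₁ c₂ : ℝ,
      (∫ t in (0 : ℝ)..1, (c₁ * t + c₂) / √(t ^ 2 + c₃ * t + c₄)) =
        -(c₁ / (2 * L)) * (r₁ - r₂) +
          (1 / (8 * L ^ 2)) * (c₁ * (4 * L ^ 2 + r₁ ^ 2 - r₂ ^ 2) + 8 * c₂ * L ^ 2) *
            Real.log ((2 * L + r₁ + r₂) / (r₁ + r₂ - 2 * L)) := by
  have ha : 0 < r₁ / (2 * L) := by positivity
  have hb : 0 < r₂ / (2 * L) := by positivity
  have hab : 1 < r₁ / (2 * L) + r₂ / (2 * L) := by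
    rwa [← add_div, one_lt_div (by positivity)]
  obtain rfl : c₃ = (r₂ / (2 * L)) ^ 2 - (r₁ / (2 * L)) ^ 2 - 1 := by
    rw [hc₃]
    field_simp
    ring
  obtain rfl : c₄ = (r₁ / (2 * L)) ^ 2 := by
    rw [hc₄]
    ring
  refine ⟨fun t ht => stewart_quadratic_pos ha hb hab ht, fun c₁ c₂ => ?_⟩
  have hratio : (r₁ / (2 * L) + r₂ / (2 * L) + 1) / (r₁ / (2 * L) + r₂ / (2 * L) - 1) =
      (2 * L + r₁ + r₂) / (r₁ + r₂ - 2 * L) := by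
    rw [← mul_div_mul_right _ _ (by positivity : 2 * L ≠ 0)]
    congr 1 <;> field_simp
    ring
  rw [integral_linear_div_sqrt_stewart_quadratic ha hb hab, hratio]
  field_simp
  ring

/-- For $L>0$ and $r_1, r_2>0$ with $|r_1-r_2| < 2L < r_1+r_2$, setting
$c_3 = (r_2^2-r_1^2-4L^2)/(4L^2)$ and $c_4 = r_1^2/(4L^2)$:
(i) $t^2+c_3 t+c_4 > 0$ on $[0,1]$, and (ii) for all $c_1,c_2$,
$\int_0^1 \frac{c_1 t + c_2}{\sqrt{t^2+c_3 t+c_4}}\,dt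
 = -\frac{c_1}{2L}(r_1-r_2) + \frac{1}{8L^2}\left[c_1(4L^2+r_1^2-r_2^2)+8c_2L^2\right]
   \ln\frac{2L+r_1+r_2}{r_1+r_2-2L}$. -/
theorem segment_potential_integral (L r₁ r₂ c₃ c₄ : ℝ)
    (hL : 0 < L) (hr₁ : 0 < r₁) (hr₂ : 0 < r₂)
    (htri₁ : |r₁ - r₂| < 2 * L) (htri₂ : 2 * L < r₁ + r₂)
    (hc₃ : c₃ = (r₂ ^ 2 - r₁ ^ 2 - 4 * L ^ 2) / (4 * L ^ 2))
    (hc₄ : c₄ = r₁ ^ 2 / (4 * L ^ 2)) :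
    (∀ t ∈ Set.Icc (0 : ℝ) 1, 0 < t ^ 2 + c₃ * t + c₄) ∧
    ∀ c₁ c₂ : ℝ,
      (∫ t in (0 : ℝ)..1, (c₁ * t + c₂) / Real.sqrt (t ^ 2 + c₃ * t + c₄)) =
        -(c₁ / (2 * L)) * (r₁ - r₂) +
          (1 / (8 * L ^ 2)) * (c₁ * (4 * L ^ 2 + r₁ ^ 2 - r₂ ^ 2) + 8 * c₂ * L ^ 2) *
            Real.log ((2 * L + r₁ + r₂) / (r₁ + r₂ - 2 * L)) := by
  exact segment_potential_integral_general L r₁ r₂ c₃ c₄ hL hr₁ hr₂ htri₂ hc₃ hc₄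
end

section
/- Let 0 ≤ A < 1/3 and let p = (ξ, η, ζ) ∈ ℝ³ not lie on the segment S = {(ξ, 0, 0) : −1−A ≤ ξ ≤ 1−A}. Then U is differentiable at p and its partial derivatives are ∂U/∂ξ = 3A·ln((s+2)/(s−2)) − (4d + 12A·s)/(s² − d²), ∂U/∂η = 16η(3A·d + s)/((s² − 4)(s² − d²)), and ∂U/∂ζ = 16ζ(3A·d + s)/((s² − 4)(s² − d²)), where s and d are evaluated at p. (Equivalently, the Hamiltonian equations of motion for a particle attracted by the non-homogeneous segment are ξ̈ = (4d + 12A·s)/(s² − d²) − 3A·ln((s+2)/(s−2)), η̈ = −16η(3A·d + s)/((s² − 4)(s² − d²)), ζ̈ = −16ζ(3A·d + s)/((s² − 4)(s² − d²)).) -/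
/-- Distance from the point $(\xi,\eta,\zeta)$ to the endpoint $(1-A,0,0)$. -/
noncomputable def R₁ (A ξ η ζ : ℝ) : ℝ := Real.sqrt ((ξ + A - 1) ^ 2 + η ^ 2 + ζ ^ 2)

/-- Distance from the point $(\xi,\eta,\zeta)$ to the endpoint $(-1-A,0,0)$. -/
noncomputable def R₂ (A ξ η ζ : ℝ) : ℝ := Real.sqrt ((ξ + A + 1) ^ 2 + η ^ 2 + ζ ^ 2)

/-- Sum of distances $s = R_1 + R_2$. -/
noncomputable def sVar (A ξ η ζ : ℝ) : ℝ := R₁ A ξ η ζ + R₂ A ξ η ζ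

/-- Difference of distances $d = R_1 - R_2$. -/
noncomputable def dVar (A ξ η ζ : ℝ) : ℝ := R₁ A ξ η ζ - R₂ A ξ η ζ

/-- The scaled potential
$U = 3Ad - \frac14 (3Ads + 4)\ln\frac{s+2}{s-2}$ of the non-homogeneous segment. -/
noncomputable def U (A ξ η ζ : ℝ) : ℝ :=
  3 * A * dVar A ξ η ζ -
    (1 / 4) * (3 * A * dVar A ξ η ζ * sVar A ξ η ζ + 4) *
      Real.log ((sVar A ξ η ζ + 2) / (sVar A ξ η ζ - 2))

/-!
In the focal coordinates `s`, `d` the potential is `3Ad - (3Ads + 4) L(s) / 4` with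
`L(s) = ln ((s + 2) / (s - 2))`, so `∂U/∂s = (3Ads + 4) / (s² - 4) - 3AdL/4` and
`∂U/∂d = 3A - 3AsL/4`. The identities `s² - d² = 4R₁R₂` and `sd = -4(ξ + A)` make the partial
derivatives of `s` and `d` in `ξ`, `η`, `ζ` rational in `s`, `d`, `η`, `ζ`, and the chain rule
finishes. Regularity comes from the triangle inequality: off the segment `s > 2 ≥ |d|`, hence
`R₁` and `R₂` are positive.
-/

section TotalDerivative

/-- The covector `a dξ + b dη + c dζ` on `ℝ × ℝ × ℝ`: the total derivative of a function whose
partial derivatives are `a`, `b`, `c`. -/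
noncomputable def covector (a b c : ℝ) : ℝ × ℝ × ℝ →L[ℝ] ℝ :=
  a • ContinuousLinearMap.fst ℝ ℝ (ℝ × ℝ) +
    b • (ContinuousLinearMap.fst ℝ ℝ ℝ).comp (ContinuousLinearMap.snd ℝ ℝ (ℝ × ℝ)) +
    c • (ContinuousLinearMap.snd ℝ ℝ ℝ).comp (ContinuousLinearMap.snd ℝ ℝ (ℝ × ℝ))

@[simp]
lemma covector_apply (a b c : ℝ) (v : ℝ × ℝ × ℝ) :
    covector a b c v = a * v.1 + b * v.2.1 + c * v.2.2 := rfl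

lemma covector_add (a b c a' b' c' : ℝ) :
    covector a b c + covector a' b' c' = covector (a + a') (b + b') (c + c') := by
  ext <;> simp

lemma covector_sub (a b c a' b' c' : ℝ) :
    covector a b c - covector a' b' c' = covector (a - a') (b - b') (c - c') := by
  ext <;> simp

lemma smul_covector (k a b c : ℝ) : k • covector a b c = covector (k * a) (k * b) (k * c) := by
  ext <;> simp

lemma hasDerivAt_partials_of_hasFDerivAt_covector {f : ℝ × ℝ × ℝ → ℝ} {a b c x y z : ℝ}
    (hf : HasFDerivAt f (covector a b c) (x, y, z)) :
    HasDerivAt (fun t => f (t, y, z)) a x ∧ HasDerivAt (fun t => f (x, t, z)) b y ∧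
      HasDerivAt (fun t => f (x, y, t)) c z := by
  have hx := (hasDerivAt_id x).prodMk (hasDerivAt_const x (y, z))
  have hy := (hasDerivAt_const y x).prodMk ((hasDerivAt_id y).prodMk (hasDerivAt_const y z))
  have hz := (hasDerivAt_const z x).prodMk ((hasDerivAt_const z y).prodMk (hasDerivAt_id z))
  exact ⟨(hf.comp_hasDerivAt x hx).congr_deriv (by simp),
    (hf.comp_hasDerivAt y hy).congr_deriv (by simp),
    (hf.comp_hasDerivAt z hz).congr_deriv (by simp)⟩

end TotalDerivative

section ChainRule

variable {E : Type*} [NormedAddCommGroup E] [NormedSpace ℝ E] {p : E}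

lemma hasFDerivAt_sqrt_sq_add_sq_add_sq {x y z : E → ℝ} {x' y' z' : E →L[ℝ] ℝ}
    (hx : HasFDerivAt x x' p) (hy : HasFDerivAt y y' p) (hz : HasFDerivAt z z' p)
    (h0 : √(x p ^ 2 + y p ^ 2 + z p ^ 2) ≠ 0) :
    HasFDerivAt (fun q => √(x q ^ 2 + y q ^ 2 + z q ^ 2))
      ((√(x p ^ 2 + y p ^ 2 + z p ^ 2))⁻¹ • (x p • x' + y p • y' + z p • z')) p := by
  have hsq := ((hx.pow 2).add (hy.pow 2)).add (hz.pow 2)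
  refine (hsq.sqrt fun h => h0 (Real.sqrt_eq_zero'.2 h.le)).congr_fderiv ?_
  ext v
  simp only [Pi.add_apply, Nat.add_one_sub_one, pow_one, nsmul_eq_mul, Nat.cast_ofNat, add_apply,
    smul_apply, smul_eq_mul]
  field_simp

lemma hasDerivAt_log_add_div_sub {c x : ℝ} (hadd : x + c ≠ 0) (hsub : x - c ≠ 0) :
    HasDerivAt (fun t => Real.log ((t + c) / (t - c))) (-(2 * c) / (x ^ 2 - c ^ 2)) x := by
  have hquot := ((hasDerivAt_id x).add_const c).div ((hasDerivAt_id x).sub_const c) hsub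
  refine (hquot.log (div_ne_zero hadd hsub)).congr_deriv ?_
  simp only [id_eq, Pi.div_apply, sq_sub_sq x c]
  field_simp
  ring

lemma hasFDerivAt_focal_potential (k : ℝ) {s d : E → ℝ} {s' d' : E →L[ℝ] ℝ}
    (hs : HasFDerivAt s s' p) (hd : HasFDerivAt d d' p)
    (hadd : s p + 2 ≠ 0) (hsub : s p - 2 ≠ 0) :
    HasFDerivAt
      (fun q => k * d q - (1 / 4) * (k * d q * s q + 4) * Real.log ((s q + 2) / (s q - 2)))
      (((k * d p * s p + 4) / (s p ^ 2 - 4) -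
          k * d p / 4 * Real.log ((s p + 2) / (s p - 2))) • s' +
        (k - k * s p / 4 * Real.log ((s p + 2) / (s p - 2))) • d') p := by
  have hlog := (hasDerivAt_log_add_div_sub hadd hsub).comp_hasFDerivAt p hs
  have hkd := hd.const_mul k
  refine (hkd.sub ((((hkd.mul hs).add_const 4).const_mul (1 / 4)).mul hlog)).congr_fderiv ?_
  ext v
  simp only [Pi.mul_apply, Function.comp_apply, sub_apply, add_apply, smul_apply, smul_eq_mul]
  ring

end ChainRule

section FocalDistances

variable (A ξ η ζ : ℝ)

lemma R₁_nonneg : 0 ≤ R₁ A ξ η ζ := Real.sqrt_nonneg _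

lemma R₂_nonneg : 0 ≤ R₂ A ξ η ζ := Real.sqrt_nonneg _

lemma R₁_sq : R₁ A ξ η ζ ^ 2 = (ξ + A - 1) ^ 2 + η ^ 2 + ζ ^ 2 := Real.sq_sqrt (by positivity)

lemma R₂_sq : R₂ A ξ η ζ ^ 2 = (ξ + A + 1) ^ 2 + η ^ 2 + ζ ^ 2 := Real.sq_sqrt (by positivity)

lemma abs_add_sub_one_le_R₁ : |ξ + A - 1| ≤ R₁ A ξ η ζ :=
  Real.abs_le_sqrt (by linarith [sq_nonneg η, sq_nonneg ζ])

lemma abs_add_add_one_le_R₂ : |ξ + A + 1| ≤ R₂ A ξ η ζ :=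
  Real.abs_le_sqrt (by linarith [sq_nonneg η, sq_nonneg ζ])

lemma sVar_sq_sub_dVar_sq :
    sVar A ξ η ζ ^ 2 - dVar A ξ η ζ ^ 2 = 4 * R₁ A ξ η ζ * R₂ A ξ η ζ := by
  unfold sVar dVar
  ring

lemma sVar_mul_dVar : sVar A ξ η ζ * dVar A ξ η ζ = -4 * (ξ + A) := by
  calc sVar A ξ η ζ * dVar A ξ η ζ = R₁ A ξ η ζ ^ 2 - R₂ A ξ η ζ ^ 2 := (sq_sub_sq _ _).symm
    _ = -4 * (ξ + A) := by rw [R₁_sq, R₂_sq]; ring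

lemma abs_dVar_le_two : |dVar A ξ η ζ| ≤ 2 := by
  have h₁ : R₁ A ξ η ζ ≤ R₂ A ξ η ζ + 2 := by
    refine le_of_sq_le_sq ?_ (by linarith [R₂_nonneg A ξ η ζ])
    have hx := neg_le_of_abs_le (abs_add_add_one_le_R₂ A ξ η ζ)
    linarith [R₁_sq A ξ η ζ, R₂_sq A ξ η ζ]
  have h₂ : R₂ A ξ η ζ ≤ R₁ A ξ η ζ + 2 := by
    refine le_of_sq_le_sq ?_ (by linarith [R₁_nonneg A ξ η ζ])
    have hx := le_of_abs_le (abs_add_sub_one_le_R₁ A ξ η ζ)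
    linarith [R₁_sq A ξ η ζ, R₂_sq A ξ η ζ]
  unfold dVar
  exact abs_sub_le_iff.2 ⟨by linarith, by linarith⟩

variable {A ξ η ζ}

lemma two_lt_sVar (hp : ¬ (η = 0 ∧ ζ = 0 ∧ -1 - A ≤ ξ ∧ ξ ≤ 1 - A)) : 2 < sVar A ξ η ζ := by
  by_contra! hs
  unfold sVar at hs
  have lower₁ := neg_le_of_abs_le (abs_add_sub_one_le_R₁ A ξ η ζ)
  have lower₂ := le_of_abs_le (abs_add_add_one_le_R₂ A ξ η ζ)
  have hR₁ : R₁ A ξ η ζ = 1 - (ξ + A) := by linarith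
  have hperp : η ^ 2 + ζ ^ 2 = 0 := by
    have hsq := R₁_sq A ξ η ζ
    rw [hR₁] at hsq
    linarith
  obtain ⟨hη, hζ⟩ := (add_eq_zero_iff_of_nonneg (sq_nonneg η) (sq_nonneg ζ)).1 hperp
  have h₁ := R₁_nonneg A ξ η ζ
  have h₂ := R₂_nonneg A ξ η ζ
  exact hp ⟨pow_eq_zero_iff two_ne_zero |>.1 hη, pow_eq_zero_iff two_ne_zero |>.1 hζ,
    by linarith, by linarith⟩

lemma R₁_pos (hs : 2 < sVar A ξ η ζ) : 0 < R₁ A ξ η ζ := by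
  have hd := neg_le_of_abs_le (abs_dVar_le_two A ξ η ζ)
  unfold sVar at hs
  unfold dVar at hd
  linarith

lemma R₂_pos (hs : 2 < sVar A ξ η ζ) : 0 < R₂ A ξ η ζ := by
  have hd := le_of_abs_le (abs_dVar_le_two A ξ η ζ)
  unfold sVar at hs
  unfold dVar at hd
  linarith

lemma hasFDerivAt_dist_axis_point {c x y z : ℝ} (h0 : √((x + c) ^ 2 + y ^ 2 + z ^ 2) ≠ 0) :
    HasFDerivAt (fun q : ℝ × ℝ × ℝ => √((q.1 + c) ^ 2 + q.2.1 ^ 2 + q.2.2 ^ 2))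
      ((√((x + c) ^ 2 + y ^ 2 + z ^ 2))⁻¹ • covector (x + c) y z) (x, y, z) := by
  have hx : HasFDerivAt (fun q : ℝ × ℝ × ℝ => q.1 + c) (.fst ℝ ℝ (ℝ × ℝ)) (x, y, z) :=
    hasFDerivAt_fst.add_const c
  have hyz : HasFDerivAt (fun q : ℝ × ℝ × ℝ => q.2) (.snd ℝ ℝ (ℝ × ℝ)) (x, y, z) :=
    hasFDerivAt_snd
  exact hasFDerivAt_sqrt_sq_add_sq_add_sq hx hyz.fst hyz.snd h0

lemma hasFDerivAt_R₁ (hR : R₁ A ξ η ζ ≠ 0) :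
    HasFDerivAt (fun p : ℝ × ℝ × ℝ => R₁ A p.1 p.2.1 p.2.2)
      ((R₁ A ξ η ζ)⁻¹ • covector (ξ + A - 1) η ζ) (ξ, η, ζ) := by
  simp only [R₁, add_sub_assoc] at hR ⊢
  exact hasFDerivAt_dist_axis_point hR

lemma hasFDerivAt_R₂ (hR : R₂ A ξ η ζ ≠ 0) :
    HasFDerivAt (fun p : ℝ × ℝ × ℝ => R₂ A p.1 p.2.1 p.2.2)
      ((R₂ A ξ η ζ)⁻¹ • covector (ξ + A + 1) η ζ) (ξ, η, ζ) := by
  simp only [R₂, add_assoc _ A] at hR ⊢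
  exact hasFDerivAt_dist_axis_point hR

end FocalDistances

section FocalCoordinates

variable {A ξ η ζ : ℝ}

lemma hasFDerivAt_sVar (hs : 2 < sVar A ξ η ζ) :
    HasFDerivAt (fun p : ℝ × ℝ × ℝ => sVar A p.1 p.2.1 p.2.2)
      ((4 / (sVar A ξ η ζ ^ 2 - dVar A ξ η ζ ^ 2)) •
        covector (-dVar A ξ η ζ * (sVar A ξ η ζ ^ 2 - 4) / 4)
          (η * sVar A ξ η ζ) (ζ * sVar A ξ η ζ)) (ξ, η, ζ) := by
  have hR₁ := (R₁_pos hs).ne'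
  have hR₂ := (R₂_pos hs).ne'
  refine ((hasFDerivAt_R₁ hR₁).add (hasFDerivAt_R₂ hR₂)).congr_fderiv ?_
  have hξ : -dVar A ξ η ζ * (sVar A ξ η ζ ^ 2 - 4) / 4 =
      (ξ + A) * sVar A ξ η ζ + dVar A ξ η ζ := by
    linear_combination (-sVar A ξ η ζ / 4) * sVar_mul_dVar A ξ η ζ
  rw [hξ, sVar_sq_sub_dVar_sq, smul_covector, smul_covector, smul_covector, covector_add]
  unfold sVar dVar
  congr 1 <;> field_simp <;> ring

lemma hasFDerivAt_dVar (hs : 2 < sVar A ξ η ζ) :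
    HasFDerivAt (fun p : ℝ × ℝ × ℝ => dVar A p.1 p.2.1 p.2.2)
      ((4 / (sVar A ξ η ζ ^ 2 - dVar A ξ η ζ ^ 2)) •
        covector (sVar A ξ η ζ * (dVar A ξ η ζ ^ 2 - 4) / 4)
          (-η * dVar A ξ η ζ) (-ζ * dVar A ξ η ζ)) (ξ, η, ζ) := by
  have hR₁ := (R₁_pos hs).ne'
  have hR₂ := (R₂_pos hs).ne'
  refine ((hasFDerivAt_R₁ hR₁).sub (hasFDerivAt_R₂ hR₂)).congr_fderiv ?_
  have hξ : sVar A ξ η ζ * (dVar A ξ η ζ ^ 2 - 4) / 4 =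
      -(ξ + A) * dVar A ξ η ζ - sVar A ξ η ζ := by
    linear_combination (dVar A ξ η ζ / 4) * sVar_mul_dVar A ξ η ζ
  rw [hξ, sVar_sq_sub_dVar_sq, smul_covector, smul_covector, smul_covector, covector_sub]
  unfold sVar dVar
  congr 1 <;> field_simp <;> ring

lemma hasFDerivAt_U (hs : 2 < sVar A ξ η ζ) :
    HasFDerivAt (fun p : ℝ × ℝ × ℝ => U A p.1 p.2.1 p.2.2)
      (covector
        (3 * A * Real.log ((sVar A ξ η ζ + 2) / (sVar A ξ η ζ - 2)) -
          (4 * dVar A ξ η ζ + 12 * A * sVar A ξ η ζ) /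
            (sVar A ξ η ζ ^ 2 - dVar A ξ η ζ ^ 2))
        (16 * η * (3 * A * dVar A ξ η ζ + sVar A ξ η ζ) /
          ((sVar A ξ η ζ ^ 2 - 4) * (sVar A ξ η ζ ^ 2 - dVar A ξ η ζ ^ 2)))
        (16 * ζ * (3 * A * dVar A ξ η ζ + sVar A ξ η ζ) /
          ((sVar A ξ η ζ ^ 2 - 4) * (sVar A ξ η ζ ^ 2 - dVar A ξ η ζ ^ 2))))
      (ξ, η, ζ) := by
  refine (hasFDerivAt_focal_potential (3 * A) (hasFDerivAt_sVar hs) (hasFDerivAt_dVar hs)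
    (by linarith) (by linarith)).congr_fderiv ?_
  have hs4 : sVar A ξ η ζ ^ 2 - 4 ≠ 0 := by nlinarith
  have hsd : sVar A ξ η ζ ^ 2 - dVar A ξ η ζ ^ 2 ≠ 0 := by
    have hR₁ := R₁_pos hs
    have hR₂ := R₂_pos hs
    rw [sVar_sq_sub_dVar_sq]
    positivity
  simp only [smul_covector, covector_add]
  generalize Real.log ((sVar A ξ η ζ + 2) / (sVar A ξ η ζ - 2)) = L
  congr 1 <;> field_simp <;> ring

end FocalCoordinates

theorem potential_partial_derivatives_general (A ξ η ζ : ℝ)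
    (hp : ¬ (η = 0 ∧ ζ = 0 ∧ -1 - A ≤ ξ ∧ ξ ≤ 1 - A)) :
    DifferentiableAt ℝ (fun p : ℝ × ℝ × ℝ => U A p.1 p.2.1 p.2.2) (ξ, η, ζ) ∧
    HasDerivAt (fun t => U A t η ζ)
      (3 * A * Real.log ((sVar A ξ η ζ + 2) / (sVar A ξ η ζ - 2)) -
        (4 * dVar A ξ η ζ + 12 * A * sVar A ξ η ζ) /
          (sVar A ξ η ζ ^ 2 - dVar A ξ η ζ ^ 2)) ξ ∧
    HasDerivAt (fun t => U A ξ t ζ)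
      (16 * η * (3 * A * dVar A ξ η ζ + sVar A ξ η ζ) /
        ((sVar A ξ η ζ ^ 2 - 4) * (sVar A ξ η ζ ^ 2 - dVar A ξ η ζ ^ 2))) η ∧
    HasDerivAt (fun t => U A ξ η t)
      (16 * ζ * (3 * A * dVar A ξ η ζ + sVar A ξ η ζ) /
        ((sVar A ξ η ζ ^ 2 - 4) * (sVar A ξ η ζ ^ 2 - dVar A ξ η ζ ^ 2))) ζ := by
  have hU := hasFDerivAt_U (two_lt_sVar hp)
  exact ⟨hU.differentiableAt, hasDerivAt_partials_of_hasFDerivAt_covector hU⟩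

/-- For $0 \le A < 1/3$ and a point $p = (\xi,\eta,\zeta)$ off the segment
$S = \{(\xi,0,0) : -1-A \le \xi \le 1-A\}$, the potential $U$ is differentiable at $p$
with partial derivatives
$\partial U/\partial\xi = 3A\ln\frac{s+2}{s-2} - \frac{4d+12As}{s^2-d^2}$,
$\partial U/\partial\eta = \frac{16\eta(3Ad+s)}{(s^2-4)(s^2-d^2)}$,
$\partial U/\partial\zeta = \frac{16\zeta(3Ad+s)}{(s^2-4)(s^2-d^2)}$. -/
theorem potential_partial_derivatives (A ξ η ζ : ℝ) (hA0 : 0 ≤ A) (hA : A < 1 / 3)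
    (hp : ¬ (η = 0 ∧ ζ = 0 ∧ -1 - A ≤ ξ ∧ ξ ≤ 1 - A)) :
    DifferentiableAt ℝ (fun p : ℝ × ℝ × ℝ => U A p.1 p.2.1 p.2.2) (ξ, η, ζ) ∧
    HasDerivAt (fun t => U A t η ζ)
      (3 * A * Real.log ((sVar A ξ η ζ + 2) / (sVar A ξ η ζ - 2)) -
        (4 * dVar A ξ η ζ + 12 * A * sVar A ξ η ζ) /
          (sVar A ξ η ζ ^ 2 - dVar A ξ η ζ ^ 2)) ξ ∧
    HasDerivAt (fun t => U A ξ t ζ)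
      (16 * η * (3 * A * dVar A ξ η ζ + sVar A ξ η ζ) /
        ((sVar A ξ η ζ ^ 2 - 4) * (sVar A ξ η ζ ^ 2 - dVar A ξ η ζ ^ 2))) η ∧
    HasDerivAt (fun t => U A ξ η t)
      (16 * ζ * (3 * A * dVar A ξ η ζ + sVar A ξ η ζ) /
        ((sVar A ξ η ζ ^ 2 - 4) * (sVar A ξ η ζ ^ 2 - dVar A ξ η ζ ^ 2))) ζ :=
  potential_partial_derivatives_general A ξ η ζ hp
end

section
/- Let 0 ≤ A < 1/3, r > 0 and x ∈ ℝ, and set d = √((A+x−1)² + r²) − √((A+x+1)² + r²) and s = √((A+x−1)² + r²) + √((A+x+1)² + r²). Then s > 2, s² > d², 3A·d + s > 0, and consequently the radial force term 16r(3A·d + s)/((s² − d²)(s² − 4)) is strictly positive. In particular, the reduced Hamiltonian system in cylindrical coordinates has no equilibria: there is no (r, θ, x, P_r, P_θ, P_x) with r > 0 at which ṙ = P_r, θ̇ = P_θ/r², ẋ = P_x, Ṗ_r = P_θ²/r³ − 16r(3A·d + s)/((s² − d²)(s² − 4)), Ṗ_θ = 0 and Ṗ_x all vanish simultaneously, since P_r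 = P_θ = P_x = 0 would force 16r(3A·d + s)/((s² − d²)(s² − 4)) = 0, which is impossible. -/
/-- $d = R_1 - R_2$ in cylindrical coordinates $(r,x)$ about the axis of the segment. -/
noncomputable def dCyl (A r x : ℝ) : ℝ :=
  Real.sqrt ((A + x - 1) ^ 2 + r ^ 2) - Real.sqrt ((A + x + 1) ^ 2 + r ^ 2)

/-- $s = R_1 + R_2$ in cylindrical coordinates $(r,x)$ about the axis of the segment. -/
noncomputable def sCyl (A r x : ℝ) : ℝ :=
  Real.sqrt ((A + x - 1) ^ 2 + r ^ 2) + Real.sqrt ((A + x + 1) ^ 2 + r ^ 2)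

/-!
Write `R₁`, `R₂` for the two square roots, so that `s = R₁ + R₂` and `d = R₁ - R₂`. For `r ≠ 0` they
are two sides of a nondegenerate triangle whose third side has length `2`: both are positive, which
gives `|d| < s`, and the strict triangle inequality gives `2 < s`. Since `|3A| ≤ 1`, the term `3A·d`
cannot outweigh `s`, so the radial force does not vanish. At an equilibrium `P_θ = 0`, and no
centrifugal term is left to balance it.
-/

/-- The radial derivative `∂U/∂r` of the potential, i.e. the attractive force term in the equation
`Ṗ_r = P_θ² / r³ - ∂U/∂r`. It is given by its closed form, in which the logarithms coming from `U`
have cancelled. -/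
noncomputable def radialForce (A r x : ℝ) : ℝ :=
  16 * r * (3 * A * dCyl A r x + sCyl A r x) /
    ((sCyl A r x ^ 2 - dCyl A r x ^ 2) * (sCyl A r x ^ 2 - 4))

theorem abs_lt_sqrt_sq_add_sq (a : ℝ) {r : ℝ} (hr : r ≠ 0) : |a| < √(a ^ 2 + r ^ 2) :=
  Real.lt_sqrt_of_sq_lt <| by
    rw [sq_abs]
    exact lt_add_of_pos_right _ (sq_pos_of_ne_zero hr)

section

variable {r : ℝ}

theorem two_lt_sCyl (A x : ℝ) (hr : r ≠ 0) : 2 < sCyl A r x :=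
  calc
    2 = -(A + x - 1) + (A + x + 1) := by ring
    _ ≤ |A + x - 1| + |A + x + 1| := add_le_add (neg_le_abs _) (le_abs_self _)
    _ < sCyl A r x := add_lt_add (abs_lt_sqrt_sq_add_sq _ hr) (abs_lt_sqrt_sq_add_sq _ hr)

theorem abs_dCyl_lt_sCyl (A x : ℝ) (hr : r ≠ 0) : |dCyl A r x| < sCyl A r x := by
  have hR₁ : 0 < √((A + x - 1) ^ 2 + r ^ 2) := by positivity
  have hR₂ : 0 < √((A + x + 1) ^ 2 + r ^ 2) := by positivity
  unfold dCyl sCyl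
  exact abs_lt.2 ⟨by linarith, by linarith⟩

theorem sq_dCyl_lt_sq_sCyl (A x : ℝ) (hr : r ≠ 0) : dCyl A r x ^ 2 < sCyl A r x ^ 2 :=
  sq_lt_sq.2 ((abs_dCyl_lt_sCyl A x hr).trans_le (le_abs_self _))

theorem mul_dCyl_add_sCyl_pos (A x : ℝ) {c : ℝ} (hc : |c| ≤ 1) (hr : r ≠ 0) :
    0 < c * dCyl A r x + sCyl A r x := by
  have h : -(c * dCyl A r x) < sCyl A r x :=
    calc
      -(c * dCyl A r x) ≤ |c * dCyl A r x| := neg_le_abs _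
      _ = |c| * |dCyl A r x| := abs_mul _ _
      _ ≤ |dCyl A r x| := mul_le_of_le_one_left (abs_nonneg _) hc
      _ < sCyl A r x := abs_dCyl_lt_sCyl A x hr
  exact neg_lt_iff_pos_add'.1 h

theorem radialForce_pos {A : ℝ} (x : ℝ) (hA : |3 * A| ≤ 1) (hr : 0 < r) :
    0 < radialForce A r x := by
  have hnum : 0 < 3 * A * dCyl A r x + sCyl A r x := mul_dCyl_add_sCyl_pos A x hA hr.ne'
  have hsd : 0 < sCyl A r x ^ 2 - dCyl A r x ^ 2 := sub_pos.2 (sq_dCyl_lt_sq_sCyl A x hr.ne')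
  have hs : 0 < sCyl A r x ^ 2 - 4 := by nlinarith only [two_lt_sCyl A x hr.ne']
  unfold radialForce
  positivity

end

theorem no_equilibria_general (A : ℝ) (hA : |A| ≤ 1 / 3) :
    (∀ r x : ℝ, 0 < r →
      2 < sCyl A r x ∧
      dCyl A r x ^ 2 < sCyl A r x ^ 2 ∧
      0 < 3 * A * dCyl A r x + sCyl A r x ∧
      0 < radialForce A r x) ∧
    ¬ ∃ r x Pθ : ℝ, 0 < r ∧
      Pθ / r ^ 2 = 0 ∧
      Pθ ^ 2 / r ^ 3 - radialForce A r x = 0 := by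
  have h3A : |3 * A| ≤ 1 := by
    rw [abs_mul, abs_of_pos three_pos]
    linarith
  refine ⟨fun r x hr ↦ ⟨two_lt_sCyl A x hr.ne', sq_dCyl_lt_sq_sCyl A x hr.ne',
    mul_dCyl_add_sCyl_pos A x h3A hr.ne', radialForce_pos x h3A hr⟩, ?_⟩
  rintro ⟨r, x, Pθ, hr, hθ, hPr⟩
  obtain rfl : Pθ = 0 := (div_eq_zero_iff.1 hθ).resolve_right (by positivity)
  have hforce : radialForce A r x = 0 := by simpa using hPr
  exact (radialForce_pos x h3A hr).ne' hforce

/-- For $0 \le A < 1/3$, $r > 0$ and $x \in \mathbb{R}$: $s > 2$, $s^2 > d^2$,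
$3Ad + s > 0$, hence the radial force term $16r(3Ad+s)/((s^2-d^2)(s^2-4))$ is strictly
positive; consequently the reduced Hamiltonian system in cylindrical coordinates has no
equilibria: no point $(r,\theta,x,P_r,P_\theta,P_x)$ with $r>0$ makes all right-hand
sides of the equations of motion vanish simultaneously. -/
theorem no_equilibria (A : ℝ) (hA0 : 0 ≤ A) (hA : A < 1 / 3) :
    (∀ r x : ℝ, 0 < r →
      2 < sCyl A r x ∧
      dCyl A r x ^ 2 < sCyl A r x ^ 2 ∧
      0 < 3 * A * dCyl A r x + sCyl A r x ∧
      0 < 16 * r * (3 * A * dCyl A r x + sCyl A r x) /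
        ((sCyl A r x ^ 2 - dCyl A r x ^ 2) * (sCyl A r x ^ 2 - 4))) ∧
    ¬ ∃ r θ x Pr Pθ Px : ℝ, 0 < r ∧
      Pr = 0 ∧
      Pθ / r ^ 2 = 0 ∧
      Px = 0 ∧
      Pθ ^ 2 / r ^ 3 - 16 * r * (3 * A * dCyl A r x + sCyl A r x) /
        ((sCyl A r x ^ 2 - dCyl A r x ^ 2) * (sCyl A r x ^ 2 - 4)) = 0 ∧
      4 * (4 * dCyl A r x + 12 * A * sCyl A r x) /
        (sCyl A r x ^ 2 - dCyl A r x ^ 2) -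
        3 * A * Real.log ((sCyl A r x + 2) / (sCyl A r x - 2)) = 0 := by
  obtain ⟨hpos, hne⟩ := no_equilibria_general A (abs_le.2 ⟨by linarith, hA.le⟩)
  exact ⟨hpos, fun ⟨r, _, x, _, Pθ, _, hr, _, hθ, _, hPr, _⟩ ↦ hne ⟨r, x, Pθ, hr, hθ, hPr⟩⟩
end

section
/- Fix A ∈ (0, 1/3) and let Λ(s) = ln((s+2)/(s−2)) and d±(s) = (−2 ± √((3A·s·Λ(s) − 6A)² + 4 − 36A²))/(3A·Λ(s)) for s > 2. Then the following limits hold: d₋(s) → −2 as s → 2⁺; d₋(s) → −∞ as s → +∞; d₊(s) → 2 as s → 2⁺; and d₊(s) → 0 as s → +∞. -/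
open Filter Topology

/-!
Multiplying numerator and denominator by `2 + √D`, where `D` is the radicand, turns the
indeterminate quotient for `d₊` into `3 A s (s Λ - 4) / (2 + √D)`. As `s → ∞`, the expansion
`Λ = 4 / s + O(s⁻³)` makes this tend to `0`, while the numerator of `d₋` tends to `-4` and its
denominator to `0⁺`. As `s → 2⁺`, `Λ` tends to infinity, so that `√D` is asymptotic to `3 A s Λ`
and `d±` tends to `±2`.
-/

/-- The function `Λ`, with the singularity `2` replaced by an arbitrary `c`. -/
noncomputable def logRatio (c s : ℝ) : ℝ := Real.log ((s + c) / (s - c))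

/-- The expression under the square root in `d±(s; A)`. -/
noncomputable def radicand (A s : ℝ) : ℝ := (3 * A * s * logRatio 2 s - 6 * A) ^ 2 + 4 - 36 * A ^ 2

/-- The smaller root `d₋(s; A)` of the circular-orbit equation, for `0 < A` and `2 < s`. -/
noncomputable def dMinus (A s : ℝ) : ℝ := (-2 - √(radicand A s)) / (3 * A * logRatio 2 s)

/-- The larger root `d₊(s; A)` of the circular-orbit equation, for `0 < A` and `2 < s`. -/
noncomputable def dPlus (A s : ℝ) : ℝ := (-2 + √(radicand A s)) / (3 * A * logRatio 2 s)

section LogRatio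

variable {c s : ℝ}

lemma logRatio_eq_log_one_add_div_one_sub (hs : s ≠ 0) :
    logRatio c s = Real.log ((1 + c / s) / (1 - c / s)) := by
  rw [logRatio, one_add_div hs, one_sub_div hs, div_div_div_cancel_right₀ hs]

lemma logRatio_pos (hc : 0 < c) (hcs : c < s) : 0 < logRatio c s :=
  Real.log_pos <| (one_lt_div (sub_pos.2 hcs)).2 (by linarith)

lemma two_mul_le_mul_logRatio (hc : 0 ≤ c) (hcs : c < s) : 2 * c ≤ s * logRatio c s := by
  have hs : 0 < s := hc.trans_lt hcs
  have hlog := Real.sum_range_le_log_div (div_nonneg hc hs.le) ((div_lt_one hs).2 hcs) 1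
  rw [← logRatio_eq_log_one_add_div_one_sub hs.ne'] at hlog
  have hlog' : c / s ≤ 1 / 2 * logRatio c s := by simpa using hlog
  rw [div_le_iff₀ hs] at hlog'
  linarith

lemma mul_mul_logRatio_sub_le (hc : 0 ≤ c) (hcs : c < s) :
    s * (s * logRatio c s - 2 * c) ≤ 2 * c ^ 2 * (c / s / (1 - (c / s) ^ 2)) := by
  have hs : 0 < s := hc.trans_lt hcs
  have hlog := Real.log_div_le_sum_range_add (div_nonneg hc hs.le) ((div_lt_one hs).2 hcs) 1
  rw [← logRatio_eq_log_one_add_div_one_sub hs.ne'] at hlog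
  have hlog' : logRatio c s ≤ 2 * (c / s + (c / s) ^ 3 / (1 - (c / s) ^ 2)) := by
    norm_num at hlog
    linarith
  calc s * (s * logRatio c s - 2 * c)
      ≤ s * (s * (2 * (c / s + (c / s) ^ 3 / (1 - (c / s) ^ 2))) - 2 * c) := by gcongr
    _ = 2 * (s * (c / s)) ^ 2 * (c / s / (1 - (c / s) ^ 2)) +
          2 * s * (s * (c / s) - c) := by ring
    _ = 2 * c ^ 2 * (c / s / (1 - (c / s) ^ 2)) := by
      rw [mul_div_cancel₀ c hs.ne', sub_self, mul_zero, add_zero]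

lemma tendsto_mul_mul_logRatio_sub_atTop (hc : 0 ≤ c) :
    Tendsto (fun s ↦ s * (s * logRatio c s - 2 * c)) atTop (𝓝 0) := by
  have hdiv : Tendsto (fun s : ℝ ↦ c / s) atTop (𝓝 0) := tendsto_id.const_div_atTop c
  have hbound : Tendsto (fun s : ℝ ↦ 2 * c ^ 2 * (c / s / (1 - (c / s) ^ 2))) atTop (𝓝 0) := by
    simpa using (hdiv.div ((hdiv.pow 2).const_sub 1) (by norm_num)).const_mul (2 * c ^ 2)
  refine squeeze_zero' ?_ ?_ hbound
  · filter_upwards [eventually_gt_atTop c] with s hcs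
    exact mul_nonneg (hc.trans hcs.le) (sub_nonneg.2 (two_mul_le_mul_logRatio hc hcs))
  · filter_upwards [eventually_gt_atTop c] with s hcs using mul_mul_logRatio_sub_le hc hcs

lemma tendsto_mul_logRatio_atTop (hc : 0 ≤ c) :
    Tendsto (fun s ↦ s * logRatio c s) atTop (𝓝 (2 * c)) := by
  have hsub : Tendsto (fun s ↦ s * logRatio c s - 2 * c) atTop (𝓝 0) := by
    refine (mul_zero (0 : ℝ) ▸ tendsto_inv_atTop_zero.mul
      (tendsto_mul_mul_logRatio_sub_atTop hc)).congr' ?_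
    filter_upwards [eventually_ne_atTop 0] with s hs using inv_mul_cancel_left₀ hs _
  simpa using hsub.add_const (2 * c)

lemma tendsto_logRatio_atTop (hc : 0 < c) : Tendsto (logRatio c) atTop (𝓝[>] 0) := by
  refine tendsto_nhdsWithin_iff.2 ⟨?_, ?_⟩
  · refine (zero_mul (2 * c) ▸ tendsto_inv_atTop_zero.mul
      (tendsto_mul_logRatio_atTop hc.le)).congr' ?_
    filter_upwards [eventually_ne_atTop 0] with s hs using inv_mul_cancel_left₀ hs _
  · filter_upwards [eventually_gt_atTop c] with s hcs using logRatio_pos hc hcs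

lemma tendsto_logRatio_nhdsGT (hc : 0 < c) : Tendsto (logRatio c) (𝓝[>] c) atTop := by
  have hadd : Tendsto (fun s ↦ s + c) (𝓝[>] c) (𝓝 (c + c)) :=
    (tendsto_id.mono_left nhdsWithin_le_nhds).add_const c
  have hsub : Tendsto (fun s ↦ s - c) (𝓝[>] c) (𝓝[>] 0) := by
    refine tendsto_nhdsWithin_iff.2 ⟨?_, ?_⟩
    · exact sub_self c ▸ (tendsto_id.mono_left nhdsWithin_le_nhds).sub_const c
    · filter_upwards [self_mem_nhdsWithin] with s (hcs : c < s) using sub_pos.2 hcs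
  exact Real.tendsto_log_atTop.comp <|
    hadd.pos_mul_atTop (add_pos hc hc) hsub.inv_tendsto_nhdsGT_zero

end LogRatio

lemma tendsto_sqrt_mul_add_sq_add_div {α : Type*} {l : Filter α} {f u : α → ℝ} {a : ℝ}
    (hf : Tendsto f l (𝓝 a)) (hu : Tendsto u l atTop) (b k : ℝ) :
    Tendsto (fun x ↦ √((f x * u x + b) ^ 2 + k) / u x) l (𝓝 |a|) := by
  have hinv : Tendsto (fun x ↦ (u x)⁻¹) l (𝓝 0) := hu.inv_tendsto_atTop
  have hsqrt : Tendsto (fun x ↦ √((f x + b * (u x)⁻¹) ^ 2 + k * (u x)⁻¹ ^ 2)) l (𝓝 |a|) := by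
    simpa [Real.sqrt_sq_eq_abs] using
      (((hf.add (hinv.const_mul b)).pow 2).add ((hinv.pow 2).const_mul k)).sqrt
  refine hsqrt.congr' ?_
  filter_upwards [hu.eventually_gt_atTop 0] with x hx
  rw [eq_div_iff hx.ne', ← Real.sqrt_mul_self hx.le, ← Real.sqrt_mul' _ (mul_self_nonneg _),
    Real.sqrt_mul_self hx.le]
  congr 1
  field_simp

section Roots

variable {A s : ℝ}

lemma radicand_eq (A s : ℝ) :
    radicand A s = 4 + 9 * A ^ 2 * (s * logRatio 2 s * (s * logRatio 2 s - 4)) := by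
  rw [radicand]
  ring

lemma four_le_radicand (A : ℝ) (hs : 2 < s) : 4 ≤ radicand A s := by
  have hmul : 4 ≤ s * logRatio 2 s := by linarith [two_mul_le_mul_logRatio zero_le_two hs]
  have hprod : 0 ≤ s * logRatio 2 s * (s * logRatio 2 s - 4) :=
    mul_nonneg (zero_le_four.trans hmul) (sub_nonneg.2 hmul)
  rw [radicand_eq]
  exact le_add_of_nonneg_right (mul_nonneg (by positivity) hprod)

lemma tendsto_sqrt_radicand_atTop (A : ℝ) : Tendsto (fun s ↦ √(radicand A s)) atTop (𝓝 2) := by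
  have hmul : Tendsto (fun s ↦ s * logRatio 2 s) atTop (𝓝 4) := by
    rw [show (4 : ℝ) = 2 * 2 by norm_num]
    exact tendsto_mul_logRatio_atTop zero_le_two
  have hrad : Tendsto (radicand A) atTop (𝓝 (2 ^ 2)) := by
    rw [funext (radicand_eq A)]
    convert ((hmul.mul (hmul.sub_const 4)).const_mul (9 * A ^ 2)).const_add 4 using 2
    norm_num
  simpa using hrad.sqrt

lemma dPlus_eq_div_two_add_sqrt_radicand (hA : A ≠ 0) (hs : 2 < s) :
    dPlus A s = 3 * A * (s * (s * logRatio 2 s - 4)) / (2 + √(radicand A s)) := by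
  have hlog : logRatio 2 s ≠ 0 := (logRatio_pos zero_lt_two hs).ne'
  have hsq : √(radicand A s) ^ 2 = radicand A s :=
    Real.sq_sqrt (zero_le_four.trans (four_le_radicand A hs))
  rw [dPlus, div_eq_div_iff (by positivity) (by positivity)]
  linear_combination hsq + radicand_eq A s

lemma tendsto_dPlus_atTop (hA : A ≠ 0) : Tendsto (dPlus A) atTop (𝓝 0) := by
  have hnum : Tendsto (fun s ↦ s * (s * logRatio 2 s - 4)) atTop (𝓝 0) := by
    rw [show (4 : ℝ) = 2 * 2 by norm_num]
    exact tendsto_mul_mul_logRatio_sub_atTop zero_le_two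
  have hquot := (hnum.const_mul (3 * A)).div ((tendsto_sqrt_radicand_atTop A).const_add 2)
    (by norm_num)
  rw [mul_zero, zero_div] at hquot
  refine hquot.congr' ?_
  filter_upwards [eventually_gt_atTop 2] with s hs using
    (dPlus_eq_div_two_add_sqrt_radicand hA hs).symm

lemma tendsto_dMinus_atTop (hA : 0 < A) : Tendsto (dMinus A) atTop atBot := by
  have hden : Tendsto (fun s ↦ (3 * A * logRatio 2 s)⁻¹) atTop atTop := by
    simp only [mul_inv]
    exact (tendsto_logRatio_atTop zero_lt_two).inv_tendsto_nhdsGT_zero.const_mul_atTop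
      (by positivity)
  exact ((tendsto_sqrt_radicand_atTop A).const_sub (-2)).neg_mul_atTop (by norm_num) hden

lemma tendsto_three_mul_mul_logRatio_nhdsGT (hA : 0 < A) :
    Tendsto (fun s ↦ 3 * A * logRatio 2 s) (𝓝[>] 2) atTop :=
  (tendsto_logRatio_nhdsGT zero_lt_two).const_mul_atTop (by positivity)

lemma tendsto_sqrt_radicand_div_nhdsGT (hA : 0 < A) :
    Tendsto (fun s ↦ √(radicand A s) / (3 * A * logRatio 2 s)) (𝓝[>] 2) (𝓝 2) := by
  have hlim := tendsto_sqrt_mul_add_sq_add_div (tendsto_id.mono_left nhdsWithin_le_nhds)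
    (tendsto_three_mul_mul_logRatio_nhdsGT hA) (-(6 * A)) (4 - 36 * A ^ 2)
  rw [abs_two] at hlim
  refine hlim.congr fun s ↦ ?_
  rw [radicand, id_eq]
  ring_nf

lemma tendsto_dMinus_nhdsGT (hA : 0 < A) : Tendsto (dMinus A) (𝓝[>] 2) (𝓝 (-2)) := by
  have hlim := ((tendsto_three_mul_mul_logRatio_nhdsGT hA).const_div_atTop (-2)).sub
    (tendsto_sqrt_radicand_div_nhdsGT hA)
  rw [zero_sub] at hlim
  exact hlim.congr fun s ↦ (sub_div _ _ _).symm

lemma tendsto_dPlus_nhdsGT (hA : 0 < A) : Tendsto (dPlus A) (𝓝[>] 2) (𝓝 2) := by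
  have hlim := ((tendsto_three_mul_mul_logRatio_nhdsGT hA).const_div_atTop (-2)).add
    (tendsto_sqrt_radicand_div_nhdsGT hA)
  rw [zero_add] at hlim
  exact hlim.congr fun s ↦ (add_div _ _ _).symm

theorem limits_of_d_pm_general (hA : 0 < A) :
    Tendsto (dMinus A) (𝓝[>] 2) (𝓝 (-2)) ∧ Tendsto (dMinus A) atTop atBot ∧
      Tendsto (dPlus A) (𝓝[>] 2) (𝓝 2) ∧ Tendsto (dPlus A) atTop (𝓝 0) :=
  ⟨tendsto_dMinus_nhdsGT hA, tendsto_dMinus_atTop hA, tendsto_dPlus_nhdsGT hA,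
    tendsto_dPlus_atTop hA.ne'⟩

end Roots

/-- For fixed $A \in (0,1/3)$, the circular-orbit roots
$d_\pm(s) = \frac{-2 \pm \sqrt{(3As\Lambda(s)-6A)^2+4-36A^2}}{3A\Lambda(s)}$, with
$\Lambda(s) = \ln\frac{s+2}{s-2}$, satisfy: $d_-(s) \to -2$ as $s \to 2^+$,
$d_-(s) \to -\infty$ as $s \to +\infty$, $d_+(s) \to 2$ as $s \to 2^+$, and
$d_+(s) \to 0$ as $s \to +\infty$. -/
theorem limits_of_d_pm (A : ℝ) (hA : 0 < A) (hA' : A < 1 / 3) :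
    Tendsto (fun s : ℝ =>
        (-2 - Real.sqrt ((3 * A * s * Real.log ((s + 2) / (s - 2)) - 6 * A) ^ 2 +
          4 - 36 * A ^ 2)) / (3 * A * Real.log ((s + 2) / (s - 2))))
      (𝓝[>] 2) (𝓝 (-2)) ∧
    Tendsto (fun s : ℝ =>
        (-2 - Real.sqrt ((3 * A * s * Real.log ((s + 2) / (s - 2)) - 6 * A) ^ 2 +
          4 - 36 * A ^ 2)) / (3 * A * Real.log ((s + 2) / (s - 2))))
      atTop atBot ∧
    Tendsto (fun s : ℝ =>
        (-2 + Real.sqrt ((3 * A * s * Real.log ((s + 2) / (s - 2)) - 6 * A) ^ 2 +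
          4 - 36 * A ^ 2)) / (3 * A * Real.log ((s + 2) / (s - 2))))
      (𝓝[>] 2) (𝓝 2) ∧
    Tendsto (fun s : ℝ =>
        (-2 + Real.sqrt ((3 * A * s * Real.log ((s + 2) / (s - 2)) - 6 * A) ^ 2 +
          4 - 36 * A ^ 2)) / (3 * A * Real.log ((s + 2) / (s - 2))))
      atTop (𝓝 0) :=
  limits_of_d_pm_general hA
end

section
/- For every real x > 4, the inequality x·ln((x+4)/(x−4)) > 8 holds; equivalently, the quantity d'(0) = (3x/16)·(x·ln((x+4)/(x−4)) − 8) is strictly positive for every x > 4. In particular, for every angular momentum value c ≠ 0 (for which x = c² + √(c⁴ + 16) > 4), the circular orbit shifts to positive d at first order in the density-slope parameter A. -/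
/-!
The logarithmic mean `(v - u) / log (v / u)` of two distinct positive numbers lies strictly below
their arithmetic mean. For `v = x + a` and `u = x - a` this reads `2 * a / log (v / u) < x`, and
`a = 4` gives the bound `8 < x * log ((x + 4) / (x - 4))`.
-/

theorem two_mul_sub_div_add_lt_log_div {u v : ℝ} (hu : 0 < u) (huv : u < v) :
    2 * (v - u) / (v + u) < Real.log (v / u) := by
  have hratio : 0 < (v - u) / u := div_pos (sub_pos.mpr huv) hu
  have hv : 0 < v := hu.trans huv
  calc 2 * (v - u) / (v + u) = 2 * ((v - u) / u) / ((v - u) / u + 2) := by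
        have hden : (v - u) / u + 2 = (v + u) / u := by field_simp; ring
        rw [hden]
        field_simp
    _ < Real.log (1 + (v - u) / u) := Real.lt_log_one_add_of_pos hratio
    _ = Real.log (v / u) := by rw [one_add_div hu.ne', add_sub_cancel]

theorem two_mul_lt_mul_log_add_div_sub {a x : ℝ} (ha : 0 < a) (hax : a < x) :
    2 * a < x * Real.log ((x + a) / (x - a)) := by
  have hx : 0 < x := ha.trans hax
  have hlog := two_mul_sub_div_add_lt_log_div (sub_pos.mpr hax) (show x - a < x + a by linarith)
  calc 2 * a = x * (2 * (x + a - (x - a)) / (x + a + (x - a))) := by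
        rw [show x + a + (x - a) = 2 * x by ring]
        field_simp
        ring
    _ < x * Real.log ((x + a) / (x - a)) := mul_lt_mul_of_pos_left hlog hx

theorem lt_add_sqrt_sq_add_sq (a : ℝ) {y : ℝ} (hy : 0 < y) : a < y + √(y ^ 2 + a ^ 2) := by
  have hsqrt : a ≤ √(y ^ 2 + a ^ 2) := Real.le_sqrt_of_sq_le (le_add_of_nonneg_left (sq_nonneg y))
  exact lt_add_of_pos_of_le hy hsqrt

/-- The coefficient `d'(0)` in `d(A) = d'(0) * A + O(A ^ 2)`, as a function of
`x = c ^ 2 + √(c ^ 4 + 16)`, where `c` is the angular momentum of the circular orbit. It is taken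
as a closed formula, without reference to the implicit function `d`. -/
noncomputable def circularOrbitShift (x : ℝ) : ℝ :=
  (3 * x / 16) * (x * Real.log ((x + 4) / (x - 4)) - 8)

theorem circularOrbitShift_pos {x : ℝ} (hx : 4 < x) : 0 < circularOrbitShift x := by
  have hprefactor : 0 < 3 * x / 16 := by linarith
  have hlog := two_mul_lt_mul_log_add_div_sub four_pos hx
  exact mul_pos hprefactor (by linarith)

/-- For every $x > 4$, $x\ln\frac{x+4}{x-4} > 8$; equivalently
$d'(0) = \frac{3x}{16}\left(x\ln\frac{x+4}{x-4} - 8\right) > 0$.  In particular, for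
every $c \neq 0$ one has $x = c^2 + \sqrt{c^4+16} > 4$ and the corresponding $d'(0)$ is
strictly positive, so the circular orbit shifts to positive $d$ at first order in the
density-slope parameter $A$. -/
theorem dprime_positive :
    (∀ x : ℝ, 4 < x →
      8 < x * Real.log ((x + 4) / (x - 4)) ∧
      0 < (3 * x / 16) * (x * Real.log ((x + 4) / (x - 4)) - 8)) ∧
    (∀ c : ℝ, c ≠ 0 →
      4 < c ^ 2 + Real.sqrt (c ^ 4 + 16) ∧
      0 < (3 * (c ^ 2 + Real.sqrt (c ^ 4 + 16)) / 16) *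
        ((c ^ 2 + Real.sqrt (c ^ 4 + 16)) *
          Real.log ((c ^ 2 + Real.sqrt (c ^ 4 + 16) + 4) /
            (c ^ 2 + Real.sqrt (c ^ 4 + 16) - 4)) - 8)) := by
  refine ⟨fun x hx => ⟨?_, circularOrbitShift_pos hx⟩, fun c hc => ?_⟩
  · linarith [two_mul_lt_mul_log_add_div_sub four_pos hx]
  · have hx : 4 < c ^ 2 + √(c ^ 4 + 16) := by
      convert lt_add_sqrt_sq_add_sq 4 (sq_pos_of_ne_zero hc) using 3
      ring
    exact ⟨hx, circularOrbitShift_pos hx⟩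
end

section
/- The function g(x) = (3x/16)·(x·ln((x+4)/(x−4)) − 8), defined for x > 4, is strictly decreasing on (4, +∞) and tends to 0 as x → +∞; consequently g(x) > 0 for all x ∈ (4, +∞). -/
open Filter Topology

/-!
With `t = 4 / x`, the function becomes `6 * (artanh t - t) / t ^ 2`, whose power series
`6 * ∑ t ^ (2 * k + 1) / (2 * k + 3)` has only odd powers, all with positive coefficients. It is
therefore strictly increasing in `t`, vanishes at `t = 0`, and near `0` is dominated by a geometric
series of size `O(t)`.
-/

open Real

theorem artanh_eq_half_log_sub_log {t : ℝ} (ht : |t| < 1) :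
    artanh t = (log (1 + t) - log (1 - t)) / 2 := by
  obtain ⟨hl, hr⟩ := abs_lt.mp ht
  rw [artanh_eq_half_log ⟨hl.le, hr.le⟩, log_div (by linarith) (by linarith)]
  ring

theorem log_add_div_sub_eq_two_mul_artanh {a x : ℝ} (h : |a| < |x|) :
    log ((x + a) / (x - a)) = 2 * artanh (a / x) := by
  have hx : x ≠ 0 := abs_pos.mp ((abs_nonneg a).trans_lt h)
  have ht : |a / x| < 1 := by rwa [abs_div, div_lt_one (abs_pos.mpr hx)]
  have hquot : (1 + a / x) / (1 - a / x) = (x + a) / (x - a) := by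
    rw [one_add_div hx, one_sub_div hx, div_div_div_cancel_right₀ hx]
  obtain ⟨hl, hr⟩ := abs_lt.mp ht
  rw [artanh_eq_half_log ⟨hl.le, hr.le⟩, hquot]
  ring

theorem hasSum_artanh {t : ℝ} (ht : |t| < 1) :
    HasSum (fun k : ℕ ↦ t ^ (2 * k + 1) / (2 * k + 1)) (artanh t) := by
  rw [artanh_eq_half_log_sub_log ht]
  refine ((hasSum_log_sub_log_of_abs_lt_one ht).div_const 2).congr_fun fun k ↦ ?_
  ring

/-- At `t = 0` both sides vanish, the right-hand one through `0 / 0 = 0`. -/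
theorem hasSum_artanh_sub_self_div_sq {t : ℝ} (ht : |t| < 1) :
    HasSum (fun k : ℕ ↦ t ^ (2 * k + 1) / (2 * k + 3)) ((artanh t - t) / t ^ 2) := by
  have htail : HasSum (fun k : ℕ ↦ t ^ (2 * (k + 1) + 1) / (2 * (k + 1 : ℕ) + 1))
      (artanh t - t) := by
    simpa using (hasSum_nat_add_iff' 1).mpr (hasSum_artanh ht)
  refine (htail.div_const (t ^ 2)).congr_fun fun k ↦ ?_
  rcases eq_or_ne t 0 with rfl | ht0
  · simp
  · push_cast
    field_simp
    ring

theorem strictMonoOn_artanh_sub_self_div_sq :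
    StrictMonoOn (fun t ↦ (artanh t - t) / t ^ 2) (Set.Ioo (-1) 1) := by
  intro s hs t ht hst
  have hpow (k : ℕ) : s ^ (2 * k + 1) < t ^ (2 * k + 1) :=
    (odd_two_mul_add_one k).strictMono_pow hst
  have hterm (k : ℕ) : s ^ (2 * k + 1) / (2 * k + 3) < t ^ (2 * k + 1) / (2 * k + 3) :=
    div_lt_div_of_pos_right (hpow k) (by positivity)
  exact hasSum_lt (fun k ↦ (hterm k).le) (hterm 0)
    (hasSum_artanh_sub_self_div_sq (abs_lt.mpr hs)) (hasSum_artanh_sub_self_div_sq (abs_lt.mpr ht))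

theorem artanh_sub_self_div_sq_pos {t : ℝ} (ht : t ∈ Set.Ioo 0 1) :
    0 < (artanh t - t) / t ^ 2 := by
  simpa using strictMonoOn_artanh_sub_self_div_sq (by simp) ⟨by linarith [ht.1], ht.2⟩ ht.1

theorem abs_artanh_sub_self_div_sq_le {t : ℝ} (ht : |t| < 1) :
    |(artanh t - t) / t ^ 2| ≤ |t| / (1 - t ^ 2) := by
  have hgeom : HasSum (fun k : ℕ ↦ |t| * (t ^ 2) ^ k) (|t| / (1 - t ^ 2)) :=
    (hasSum_geometric_of_lt_one (sq_nonneg t) ((sq_lt_one_iff_abs_lt_one t).mpr ht)).mul_left |t|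
  refine (hasSum_artanh_sub_self_div_sq ht).norm_le_of_bounded hgeom fun k ↦ ?_
  calc ‖t ^ (2 * k + 1) / (2 * k + 3)‖
      = |t| * (t ^ 2) ^ k / (2 * k + 3) := by
        rw [norm_eq_abs, abs_div, abs_of_pos (by positivity : (0 : ℝ) < 2 * k + 3), pow_succ',
          pow_mul, abs_mul, abs_of_nonneg (by positivity : 0 ≤ (t ^ 2) ^ k)]
    _ ≤ |t| * (t ^ 2) ^ k :=
        div_le_self (by positivity) (by linarith [(k.cast_nonneg : (0 : ℝ) ≤ k)])

theorem tendsto_artanh_sub_self_div_sq :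
    Tendsto (fun t ↦ (artanh t - t) / t ^ 2) (𝓝 0) (𝓝 0) := by
  have hbound : Tendsto (fun t : ℝ ↦ |t| / (1 - t ^ 2)) (𝓝 0) (𝓝 0) := by
    have : ContinuousAt (fun t : ℝ ↦ |t| / (1 - t ^ 2)) 0 := by fun_prop (disch := norm_num)
    simpa [ContinuousAt] using this
  have hball : ∀ᶠ t : ℝ in 𝓝 0, |t| < 1 :=
    (continuous_abs.tendsto' 0 0 abs_zero).eventually_lt_const one_pos
  exact squeeze_zero_norm' (hball.mono fun _ ↦ abs_artanh_sub_self_div_sq_le) hbound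

/-- The function $g(x) = \frac{3x}{16}\left(x\ln\frac{x+4}{x-4} - 8\right)$, defined
for $x > 4$, is strictly decreasing on $(4,+\infty)$ and tends to $0$ as
$x \to +\infty$; consequently $g(x) > 0$ for all $x \in (4,+\infty)$. -/
theorem g_strict_anti_tendsto_zero_positive :
    StrictAntiOn (fun x : ℝ => (3 * x / 16) * (x * Real.log ((x + 4) / (x - 4)) - 8))
      (Set.Ioi (4 : ℝ)) ∧
    Tendsto (fun x : ℝ => (3 * x / 16) * (x * Real.log ((x + 4) / (x - 4)) - 8))
      atTop (𝓝 0) ∧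
    ∀ x : ℝ, 4 < x →
      0 < (3 * x / 16) * (x * Real.log ((x + 4) / (x - 4)) - 8) := by
  have hg {x : ℝ} (hx : 4 < x) : (3 * x / 16) * (x * log ((x + 4) / (x - 4)) - 8) =
      6 * ((artanh (4 / x) - 4 / x) / (4 / x) ^ 2) := by
    have hx0 : 0 < x := by linarith
    rw [log_add_div_sub_eq_two_mul_artanh (by rwa [abs_of_pos hx0, abs_of_pos four_pos])]
    field_simp
    ring
  have hmem {x : ℝ} (hx : 4 < x) : 4 / x ∈ Set.Ioo 0 1 :=
    ⟨by positivity, (div_lt_one (by linarith)).mpr hx⟩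
  have hsub : Set.Ioo (0 : ℝ) 1 ⊆ Set.Ioo (-1) 1 := Set.Ioo_subset_Ioo_left (by norm_num)
  refine ⟨fun x (hx : 4 < x) y (hy : 4 < y) hxy ↦ ?_, ?_, fun x hx ↦ ?_⟩
  · have hlt : 4 / y < 4 / x := div_lt_div_of_pos_left four_pos (by linarith) hxy
    simpa only [hg hx, hg hy] using mul_lt_mul_of_pos_left
      (strictMonoOn_artanh_sub_self_div_sq (hsub (hmem hy)) (hsub (hmem hx)) hlt) (by norm_num)
  · have hlim : Tendsto (fun x : ℝ ↦ 4 / x) atTop (𝓝 0) := tendsto_const_nhds.div_atTop tendsto_id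
    simpa using ((tendsto_artanh_sub_self_div_sq.comp hlim).const_mul 6).congr'
      ((eventually_gt_atTop 4).mono fun x hx ↦ (hg hx).symm)
  · rw [hg hx]
    exact mul_pos (by norm_num) (artanh_sub_self_div_sq_pos (hmem hx))
end
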